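/- arXiv:1804.09527 — 2 statements merged into one kernel-verified Lean document; each statement's English description precedes it below -/
import Mathlib

section
/- Let R = ℝ[[t]] be the ring of formal power series over ℝ, let A be the R-subalgebra of Mat₆(R) consisting of all matrices whose (i,j) entry lies in tR whenever i ∈ {1,2,3,4} and j ∈ {5,6}, and set a₁ = diag(1, −1, 1, −1, t, t), a₂ = diag(1, −1, 1, 1, t, −t). For i = 1, 2 define σᵢ(x) = aᵢ⁻¹ xᵀ aᵢ, computed in Mat₆(ℝ((t))). Then each σᵢ maps A into A and restricts to an R-linear involution (anti-automorphism of order two) of A, and there is no R-algebra automorphism ψ of A such that ψ ∘ σ₁ = σ₂ ∘ ψ. -/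
open Matrix

noncomputable section

/-- `s : A → A` is an `R`-linear involution (anti-automorphism of order two) of the
`R`-algebra `A`. -/
def IsRingInvolutionOver (R A : Type*) [CommSemiring R] [Ring A] [Algebra R A]
    (s : A → A) : Prop :=
  (∀ (r : R) (x : A), s (r • x) = r • s x) ∧ (∀ x y : A, s (x + y) = s x + s y) ∧
    (∀ x y : A, s (x * y) = s y * s x) ∧ s 1 = 1 ∧ (∀ x : A, s (s x) = x)

/-- The hereditary order `A ⊆ Mat₆(ℝ[[t]])`: all matrices whose `(i,j)` entry is divisible
by `t` (i.e. lies in `t·ℝ[[t]]`) whenever `i ∈ {1,2,3,4}` and `j ∈ {5,6}` (here indexed by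
`i ∈ {0,1,2,3}` and `j ∈ {4,5}`). -/
def herOrder : Subalgebra (PowerSeries ℝ) (Matrix (Fin 6) (Fin 6) (PowerSeries ℝ)) where
  carrier := {x | ∀ i j : Fin 6, i.val ≤ 3 → 4 ≤ j.val → (PowerSeries.X : PowerSeries ℝ) ∣ x i j}
  mul_mem' := by
    intro x y hx hy i j hi hj
    rw [Matrix.mul_apply]
    refine Finset.dvd_sum fun k _ => ?_
    by_cases hk : (k : ℕ) ≤ 3
    · exact dvd_mul_of_dvd_right (hy k j hk hj) _
    · exact dvd_mul_of_dvd_left (hx i k hi (by omega)) _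
  add_mem' := by
    intro x y hx hy i j hi hj
    exact dvd_add (hx i j hi hj) (hy i j hi hj)
  one_mem' := by
    intro i j hi hj
    rw [Matrix.one_apply_ne (Fin.ne_of_val_ne (by omega))]
    exact dvd_zero _
  zero_mem' := by
    intro i j hi hj
    rw [Matrix.zero_apply]
    exact dvd_zero _
  algebraMap_mem' := by
    intro r i j hi hj
    rw [Matrix.algebraMap_matrix_apply, if_neg (Fin.ne_of_val_ne (by omega : i.val ≠ j.val))]
    exact dvd_zero _

/-- The element `t` of the field of Laurent series `ℝ((t))`. -/
def tL : LaurentSeries ℝ := (PowerSeries.X : PowerSeries ℝ)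

/-- The canonical embedding `Mat₆(ℝ[[t]]) → Mat₆(ℝ((t)))`. -/
def toF : Matrix (Fin 6) (Fin 6) (PowerSeries ℝ) →+* Matrix (Fin 6) (Fin 6) (LaurentSeries ℝ) :=
  (HahnSeries.ofPowerSeries ℤ ℝ).mapMatrix

/-- `a₁ = diag(1, −1, 1, −1, t, t)`, viewed in `Mat₆(ℝ((t)))`. -/
def a1F : Matrix (Fin 6) (Fin 6) (LaurentSeries ℝ) := diagonal ![1, -1, 1, -1, tL, tL]

/-- `a₂ = diag(1, −1, 1, 1, t, −t)`, viewed in `Mat₆(ℝ((t)))`. -/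
def a2F : Matrix (Fin 6) (Fin 6) (LaurentSeries ℝ) := diagonal ![1, -1, 1, 1, tL, -tL]

/-!
Reduction modulo `t` of the block on the indices `5, 6` is a surjection `A → Mat₂(ℝ)`. Any ring
homomorphism `A → Mat₂(ℝ)` that kills `t` factors through it, because the sixteen matrix units of
the complementary `4 × 4` block have no nonzero image in `Mat₂(ℝ)`; so every `R`-algebra
automorphism of `A` preserves its kernel. On the quotient `Mat₂(ℝ)` the involution `σ₁` induces the
adjoint of the anisotropic form `⟨1, 1⟩`, and `σ₂` that of the isotropic form `⟨1, -1⟩`. Hence the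
implication `σ(x) x ≡ 0 → x ≡ 0` holds for `σ₁` and fails for `σ₂`, whereas an intertwining
automorphism would transport it.
-/

section MatrixLemmas

theorem linearIndependent_matrixUnit_mulVec {k m n : Type*} [CommRing k] [IsDomain k]
    [Fintype n] {ε : m → m → Matrix n n k}
    (hmul : ∀ i j l, ε i j * ε j l = ε i l)
    (horth : ∀ i j l r, j ≠ l → ε i j * ε l r = 0) {i₀ : m} {v : n → k}
    (hv : ε i₀ i₀ *ᵥ v ≠ 0) : LinearIndependent k fun i => ε i i₀ *ᵥ v := by
  rw [linearIndependent_iff']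
  intro s c hc i hi
  have hproj : ε i₀ i *ᵥ ∑ j ∈ s, c j • ε j i₀ *ᵥ v = c i • ε i₀ i₀ *ᵥ v := by
    rw [mulVec_sum, Finset.sum_eq_single_of_mem i hi]
    · rw [mulVec_smul, mulVec_mulVec, hmul]
    · intro j _ hj
      rw [mulVec_smul, mulVec_mulVec, horth _ _ _ _ hj.symm, zero_mulVec, smul_zero]
  rw [hc, mulVec_zero] at hproj
  exact (smul_eq_zero.1 hproj.symm).resolve_right hv

theorem matrixUnit_eq_zero_of_card_lt {k m n : Type*} [CommRing k] [IsDomain k]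
    [Fintype m] [Fintype n] {ε : m → m → Matrix n n k}
    (hmul : ∀ i j l, ε i j * ε j l = ε i l)
    (horth : ∀ i j l r, j ≠ l → ε i j * ε l r = 0)
    (hcard : Fintype.card n < Fintype.card m) (i : m) : ε i i = 0 := by
  classical
  by_contra hi
  obtain ⟨v, hv⟩ : ∃ v, ε i i *ᵥ v ≠ 0 := by
    by_contra! h
    exact hi (ext_of_mulVec_single fun j => by rw [h, zero_mulVec])
  have hle := (linearIndependent_matrixUnit_mulVec hmul horth hv).fintype_card_le_finrank
  rw [Module.finrank_fintype_fun_eq_card] at hle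
  exact hcard.not_ge hle

variable {k m n : Type*} [CommRing k] [Fintype n] [DecidableEq n]

theorem transpose_mul_diagonal_mul_apply_self (w : n → k) (M : Matrix n m k) (j : m) :
    (Mᵀ * diagonal w * M) j j = QuadraticMap.weightedSumSquares k w fun i => M i j := by
  rw [mul_apply, QuadraticMap.weightedSumSquares_apply]
  refine Finset.sum_congr rfl fun i _ => ?_
  rw [mul_diagonal, transpose_apply, smul_eq_mul]
  ring

theorem eq_zero_of_transpose_mul_diagonal_mul_self_eq_zero {w : n → k}
    (hw : (QuadraticMap.weightedSumSquares k w).Anisotropic) {M : Matrix n m k}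
    (hM : Mᵀ * diagonal w * M = 0) : M = 0 := by
  ext i j
  refine congrFun (hw (fun i => M i j) ?_) i
  rw [← transpose_mul_diagonal_mul_apply_self, hM, Matrix.zero_apply]

end MatrixLemmas

section Adjoint

variable {R ι : Type*} [CommRing R] [Fintype ι] [DecidableEq ι]

theorem isRingInvolutionOver_of_isAdjointPair {A : Subalgebra R (Matrix ι ι R)}
    {G : Matrix ι ι R} (hsymm : G.IsSymm) (hreg : IsLeftRegular G) {s : A → A}
    (hs : ∀ x : A, IsAdjointPair G G (x : Matrix ι ι R) (s x)) : IsRingInvolutionOver R A s := by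
  have hunique : ∀ {x y : A}, IsAdjointPair G G (x : Matrix ι ι R) y → s x = y :=
    fun {x y} h => Subtype.ext (hreg ((hs x).symm.trans h))
  have hs' : ∀ x : A, (x : Matrix ι ι R)ᵀ * G = G * s x := hs
  refine ⟨fun r x => hunique ?_, fun x y => hunique ?_, fun x y => hunique ?_, hunique ?_,
    fun x => hunique ?_⟩ <;> unfold Matrix.IsAdjointPair
  · simp [hs']
  · simp [add_mul, mul_add, hs']
  · simp only [MulMemClass.coe_mul, transpose_mul]
    rw [mul_assoc, hs', ← mul_assoc, hs', mul_assoc]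
  · simp
  · simpa [hsymm.eq] using (congrArg transpose (hs' x)).symm

theorem isAdjointPair_iff_map_eq {K : Type*} [CommRing K] [Algebra R K] [FaithfulSMul R K]
    {G : Matrix ι ι R} (hG : IsUnit ((algebraMap R K).mapMatrix G)) (x y : Matrix ι ι R) :
    IsAdjointPair G G x y ↔ (algebraMap R K).mapMatrix y =
      ((algebraMap R K).mapMatrix G)⁻¹ * ((algebraMap R K).mapMatrix x)ᵀ *
        (algebraMap R K).mapMatrix G := by
  have hinj : Function.Injective ((algebraMap R K).mapMatrix (m := ι)) :=
    fun _ _ h => Matrix.map_injective (FaithfulSMul.algebraMap_injective R K) h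
  rw [mul_assoc, ← hG.mul_right_inj,
    mul_nonsing_inv_cancel_left _ _ (isUnit_iff_isUnit_det _ |>.1 hG), Matrix.IsAdjointPair,
    ← hinj.eq_iff, map_mul, map_mul, eq_comm]
  rfl

end Adjoint

section BlockOrder

variable {R ι : Type*} [CommRing R] [Fintype ι] [DecidableEq ι]

/-- The block order in `Mat_ι(R)` attached to the block `p ⊆ ι` and to `t`: the matrices whose
entries with row outside `p` and column in `p` are divisible by `t`. -/
def blockOrder (p : ι → Prop) (t : R) : Subalgebra R (Matrix ι ι R) where
  carrier := {x | ∀ i j, ¬ p i → p j → t ∣ x i j}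
  mul_mem' := by
    intro x y hx hy i j hi hj
    refine Finset.dvd_sum fun l _ => ?_
    by_cases hl : p l
    · exact (hx i l hi hl).mul_right _
    · exact (hy l j hl hj).mul_left _
  add_mem' hx hy i j hi hj := dvd_add (hx i j hi hj) (hy i j hi hj)
  algebraMap_mem' r i j hi hj := by
    rw [algebraMap_matrix_apply, if_neg (by rintro rfl; exact hi hj)]
    exact dvd_zero t

namespace blockOrder

variable {p : ι → Prop} {t : R}

theorem single_mem {i j : ι} {r : R} (h : ¬ p i → p j → t ∣ r) :
    single i j r ∈ blockOrder p t := by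
  intro a b ha hb
  rw [single_apply]
  split_ifs with hab
  · exact h (hab.1 ▸ ha) (hab.2 ▸ hb)
  · exact dvd_zero t

/-- The Gram matrix `diag(g)` with `gᵢ = t uᵢ` on the block `p` and `gᵢ = uᵢ` elsewhere. -/
def gramMatrix (p : ι → Prop) [DecidablePred p] (t : R) (u : ι → Rˣ) : Matrix ι ι R :=
  diagonal fun i => if p i then t * u i else u i

/-- The reductions of the `uᵢ`, `i ∈ p`, in the residue ring `R / (t)`. -/
def residueWeights (p : ι → Prop) (t : R) (u : ι → Rˣ) : {i // p i} → R ⧸ Ideal.span {t} :=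
  fun i => Ideal.Quotient.mk (Ideal.span {t}) (u i)

/-- The diagonal quadratic form with coefficients `uᵢ`, `i ∈ p`, over the residue ring: the
reduction of the block of `gramMatrix p t u` on `p` after division by `t`. -/
def residueForm (p : ι → Prop) [DecidablePred p] (t : R) (u : ι → Rˣ) :
    QuadraticForm (R ⧸ Ideal.span {t}) ({i // p i} → R ⧸ Ideal.span {t}) :=
  QuadraticMap.weightedSumSquares _ (residueWeights p t u)

variable [DecidablePred p]

theorem isLeftRegular_gramMatrix (ht : IsLeftRegular t) (u : ι → Rˣ) :
    IsLeftRegular (gramMatrix p t u) := by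
  intro x y hxy
  ext i j
  have hij := congrFun₂ hxy i j
  simp only [gramMatrix, diagonal_mul] at hij
  split_ifs at hij
  · exact ht.mul (u i).isUnit.isRegular.left hij
  · exact (u i).isUnit.isRegular.left hij

theorem isUnit_map_gramMatrix {K : Type*} [CommRing K] [Algebra R K]
    (ht : IsUnit (algebraMap R K t)) (u : ι → Rˣ) :
    IsUnit ((algebraMap R K).mapMatrix (gramMatrix p t u)) := by
  rw [gramMatrix, RingHom.mapMatrix_apply, diagonal_map (map_zero _), isUnit_diagonal,
    Pi.isUnit_iff]
  intro i
  have hu := (u i).isUnit.map (algebraMap R K)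
  split_ifs
  · rw [map_mul]
    exact ht.mul hu
  · exact hu

theorem exists_isAdjointPair_gramMatrix (u : ι → Rˣ) {x : Matrix ι ι R} (hx : x ∈ blockOrder p t) :
    ∃ y ∈ blockOrder p t, IsAdjointPair (gramMatrix p t u) (gramMatrix p t u) x y := by
  have hentry : ∀ i j, ∃ z, (¬ p i → p j → t ∣ z) ∧
      x j i * (if p j then t * u j else u j) = (if p i then t * u i else u i) * z := by
    intro i j
    have hu : (u i : R) * ↑(u i)⁻¹ = 1 := Units.mul_inv _
    by_cases hi : p i <;> by_cases hj : p j <;> simp only [hi, hj, if_true, if_false]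
    · exact ⟨↑(u i)⁻¹ * x j i * u j, by simp, by linear_combination -t * x j i * u j * hu⟩
    · obtain ⟨z, hz⟩ := hx j i hj hi
      exact ⟨↑(u i)⁻¹ * z * u j, by simp, by
        linear_combination (u j : R) * hz - t * z * u j * hu⟩
    · exact ⟨t * (↑(u i)⁻¹ * x j i * u j), by simp, by
        linear_combination -t * x j i * u j * hu⟩
    · exact ⟨↑(u i)⁻¹ * x j i * u j, by simp, by linear_combination -x j i * u j * hu⟩
  choose y hmem hy using hentry
  refine ⟨of y, hmem, ?_⟩
  ext i j
  simpa [gramMatrix] using hy i j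

/-- Reduction modulo `t` of the diagonal block on `p`. It is multiplicative because the entries
with row outside `p` and column in `p` vanish modulo `t`. -/
def residue (p : ι → Prop) [DecidablePred p] (t : R) :
    blockOrder p t →+* Matrix {i // p i} {i // p i} (R ⧸ Ideal.span {t}) where
  toFun x := (Ideal.Quotient.mk (Ideal.span {t})).mapMatrix ((x : Matrix ι ι R).toBlock p p)
  map_one' := by
    rw [OneMemClass.coe_one, toBlock_one_self, map_one]
  map_zero' := map_zero _
  map_add' x y := map_add _ (toBlock x.1 p p) (toBlock y.1 p p)
  map_mul' x y := by
    have hy : ((y : Matrix ι ι R).toBlock (fun i => ¬ p i) p).map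
        (Ideal.Quotient.mk (Ideal.span {t})) = 0 := by
      ext i j
      exact Ideal.Quotient.eq_zero_iff_dvd _ _ |>.2 (y.2 i j i.2 j.2)
    rw [MulMemClass.coe_mul, toBlock_mul_eq_add p p p, map_add, map_mul, add_eq_left,
      RingHom.mapMatrix_apply, Matrix.map_mul, hy, Matrix.mul_zero]

theorem residue_apply (x : blockOrder p t) (i j : {i // p i}) :
    residue p t x i j = Ideal.Quotient.mk (Ideal.span {t}) (x.1 i j) := rfl

theorem residue_smul_self (x : blockOrder p t) : residue p t (t • x) = 0 := by
  ext i j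
  exact Ideal.Quotient.eq_zero_iff_dvd _ _ |>.2 (dvd_mul_right t _)

theorem residue_surjective : Function.Surjective (residue p t) := by
  intro M
  choose z hz using fun i j => Ideal.Quotient.mk_surjective (M i j)
  refine ⟨⟨of fun i j => if h : p i ∧ p j then z ⟨i, h.1⟩ ⟨j, h.2⟩ else 0, fun i j hi _ => ?_⟩, ?_⟩
  · simp [hi]
  · ext i j
    simp [residue_apply, i.2, j.2, hz]

theorem isAdjointPair_residue (ht : IsLeftRegular t) (u : ι → Rˣ) {x y : blockOrder p t}
    (h : IsAdjointPair (gramMatrix p t u) (gramMatrix p t u) (x : Matrix ι ι R) y) :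
    IsAdjointPair (diagonal (residueWeights p t u)) (diagonal (residueWeights p t u))
      (residue p t x) (residue p t y) := by
  ext i j
  have hij : t * (x.1 j i * u j) = t * (u i * y.1 i j) := by
    have := congrFun₂ h i j
    simp only [gramMatrix, mul_diagonal, diagonal_mul, transpose_apply, i.2, j.2, if_true] at this
    linear_combination this
  rw [mul_diagonal, diagonal_mul, transpose_apply, residue_apply, residue_apply, residueWeights,
    residueWeights, ← map_mul, ht hij, map_mul]

variable {k n : Type*} [CommRing k] [IsDomain k] [Fintype n] [DecidableEq n]

theorem map_single_eq_zero_of_card_lt (hcard : Fintype.card n < Fintype.card {i // ¬ p i})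
    (φ : blockOrder p t →+* Matrix n n k) {i : ι} (hi : ¬ p i) :
    φ ⟨single i i 1, single_mem fun h h' => (h h').elim⟩ = 0 := by
  let ε (i j : {i // ¬ p i}) : blockOrder p t :=
    ⟨single i j 1, single_mem fun _ h => (j.2 h).elim⟩
  refine matrixUnit_eq_zero_of_card_lt (ε := fun i j => φ (ε i j)) (fun i j l => ?_)
    (fun i j l r hjl => ?_) hcard ⟨i, hi⟩
  · rw [← map_mul]
    congr 1
    exact Subtype.ext (by simp [ε])
  · rw [← map_mul, ← map_zero φ]
    congr 1
    exact Subtype.ext (single_mul_single_of_ne _ _ _ _ (Subtype.coe_ne_coe.2 hjl) _)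

theorem ker_residue_le_ker (hcard : Fintype.card n < Fintype.card {i // ¬ p i})
    (φ : blockOrder p t →+* Matrix n n k) (hφ : ∀ x, φ (t • x) = 0) :
    RingHom.ker (residue p t) ≤ RingHom.ker φ := by
  -- An entry in a row or column outside `p` absorbs a matrix unit killed by `φ`;
  -- the entries of the block on `p` are divisible by `t`.
  intro x hx
  have hentry : ∀ i j, φ ⟨single i j (x.1 i j), single_mem (x.2 i j)⟩ = 0 := by
    intro i j
    by_cases hi : p i
    · by_cases hj : p j
      · obtain ⟨z, hz⟩ : t ∣ x.1 i j :=
          Ideal.Quotient.eq_zero_iff_dvd _ _ |>.1 (congrFun₂ hx ⟨i, hi⟩ ⟨j, hj⟩)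
        rw [← hφ ⟨single i j z, single_mem fun h => (h hi).elim⟩]
        congr 1
        exact Subtype.ext (by simp [hz])
      · rw [← mul_zero (φ ⟨single i j (x.1 i j), single_mem (x.2 i j)⟩),
          ← map_single_eq_zero_of_card_lt hcard φ hj, ← map_mul]
        congr 1
        exact Subtype.ext (by simp)
    · rw [← zero_mul (φ ⟨single i j (x.1 i j), single_mem (x.2 i j)⟩),
        ← map_single_eq_zero_of_card_lt hcard φ hi, ← map_mul]
      congr 1
      exact Subtype.ext (by simp)
  have hsum : x = ∑ i, ∑ j, ⟨single i j (x.1 i j), single_mem (x.2 i j)⟩ :=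
    Subtype.ext (by simpa using matrix_eq_sum_single x.1)
  rw [RingHom.mem_ker, hsum, map_sum]
  exact Finset.sum_eq_zero fun i _ => by rw [map_sum, Finset.sum_eq_zero fun j _ => hentry i j]

theorem residue_map_eq_zero_of_residue_eq_zero [(Ideal.span {t}).IsPrime]
    (hcard : Fintype.card {i // p i} < Fintype.card {i // ¬ p i})
    (ψ : blockOrder p t →ₐ[R] blockOrder p t) {x : blockOrder p t} (hx : residue p t x = 0) :
    residue p t (ψ x) = 0 :=
  ker_residue_le_ker hcard ((residue p t).comp (ψ : blockOrder p t →+* blockOrder p t))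
    (fun y => by simpa using residue_smul_self (ψ y)) hx

/-- An endomap `s` of the block order, in practice an involution, is residually anisotropic if the
hermitian form `s x * x` has no nontrivial zero in the residue block on `p`. -/
def ResiduallyAnisotropic (s : blockOrder p t → blockOrder p t) : Prop :=
  ∀ x, residue p t (s x * x) = 0 → residue p t x = 0

theorem ResiduallyAnisotropic.of_intertwines [(Ideal.span {t}).IsPrime]
    (hcard : Fintype.card {i // p i} < Fintype.card {i // ¬ p i})
    {s₁ s₂ : blockOrder p t → blockOrder p t} (ψ : blockOrder p t ≃ₐ[R] blockOrder p t)
    (hψ : ∀ x, ψ (s₁ x) = s₂ (ψ x)) (h : ResiduallyAnisotropic s₁) :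
    ResiduallyAnisotropic s₂ := by
  intro y hy
  have hpull : ψ.symm (s₂ y * y) = s₁ (ψ.symm y) * ψ.symm y := by
    rw [AlgEquiv.symm_apply_eq, map_mul, hψ, ψ.apply_symm_apply]
  have hx : residue p t (ψ.symm y) = 0 :=
    h _ (hpull ▸ residue_map_eq_zero_of_residue_eq_zero hcard ψ.symm.toAlgHom hy)
  simpa using residue_map_eq_zero_of_residue_eq_zero hcard ψ.toAlgHom hx

theorem residuallyAnisotropic_iff (ht : IsLeftRegular t) (u : ι → Rˣ)
    {s : blockOrder p t → blockOrder p t}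
    (hs : ∀ x : blockOrder p t,
      IsAdjointPair (gramMatrix p t u) (gramMatrix p t u) (x : Matrix ι ι R) (s x)) :
    ResiduallyAnisotropic s ↔ (residueForm p t u).Anisotropic := by
  set D := diagonal (residueWeights p t u)
  have hDunit : IsUnit D :=
    isUnit_diagonal.2 (Pi.isUnit_iff.2 fun i => (u i).isUnit.map (Ideal.Quotient.mk _))
  have hzero : ∀ x, residue p t (s x * x) = 0 ↔ (residue p t x)ᵀ * D * residue p t x = 0 := by
    intro x
    have hadj : (residue p t x)ᵀ * D = D * residue p t (s x) := isAdjointPair_residue ht u (hs x)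
    rw [hadj, mul_assoc, ← map_mul, hDunit.mul_right_eq_zero]
  simp only [ResiduallyAnisotropic, hzero]
  refine ⟨fun h v hv => funext fun i => ?_,
    fun h x hx => eq_zero_of_transpose_mul_diagonal_mul_self_eq_zero h hx⟩
  obtain ⟨x, hx⟩ := residue_surjective (of fun i _ => v i)
  refine congrFun₂ (hx ▸ h x ?_) i i
  rw [hx]
  ext a b
  exact (transpose_mul_diagonal_mul_apply_self _ _ b).trans hv

theorem exists_isRingInvolutionOver (ht : IsLeftRegular t) (u : ι → Rˣ) :
    ∃ s : blockOrder p t → blockOrder p t,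
      (∀ x : blockOrder p t,
        IsAdjointPair (gramMatrix p t u) (gramMatrix p t u) (x : Matrix ι ι R) (s x)) ∧
      IsRingInvolutionOver R (blockOrder p t) s := by
  choose s hmem hs using fun x : blockOrder p t => exists_isAdjointPair_gramMatrix u x.2
  exact ⟨fun x => ⟨s x, hmem x⟩, hs,
    isRingInvolutionOver_of_isAdjointPair (isSymm_diagonal _) (isLeftRegular_gramMatrix ht u) hs⟩

end blockOrder

end BlockOrder

section Intertwining

open blockOrder

theorem no_automorphism_intertwines_orthogonal_involutions_general {R K ι : Type*} [CommRing R]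
    [CommRing K] [Algebra R K] [FaithfulSMul R K] [Fintype ι] [DecidableEq ι] {p : ι → Prop}
    [DecidablePred p] {t : R} (ht : IsUnit (algebraMap R K t)) (hprime : (Ideal.span {t}).IsPrime)
    (hcard : Fintype.card {i // p i} < Fintype.card {i // ¬ p i}) {u₁ u₂ : ι → Rˣ}
    (h₁ : (residueForm p t u₁).Anisotropic) (h₂ : ¬ (residueForm p t u₂).Anisotropic) :
    ∃ s₁ s₂ : blockOrder p t → blockOrder p t,
      (∀ x : blockOrder p t, (algebraMap R K).mapMatrix (s₁ x : Matrix ι ι R) =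
        ((algebraMap R K).mapMatrix (gramMatrix p t u₁))⁻¹ *
          ((algebraMap R K).mapMatrix (x : Matrix ι ι R))ᵀ *
            (algebraMap R K).mapMatrix (gramMatrix p t u₁)) ∧
      (∀ x : blockOrder p t, (algebraMap R K).mapMatrix (s₂ x : Matrix ι ι R) =
        ((algebraMap R K).mapMatrix (gramMatrix p t u₂))⁻¹ *
          ((algebraMap R K).mapMatrix (x : Matrix ι ι R))ᵀ *
            (algebraMap R K).mapMatrix (gramMatrix p t u₂)) ∧
      IsRingInvolutionOver R (blockOrder p t) s₁ ∧ IsRingInvolutionOver R (blockOrder p t) s₂ ∧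
      ¬ ∃ ψ : blockOrder p t ≃ₐ[R] blockOrder p t, ∀ x, ψ (s₁ x) = s₂ (ψ x) := by
  have hreg : IsLeftRegular t := fun a b hab =>
    FaithfulSMul.algebraMap_injective R K
      (ht.mul_left_cancel (by simpa only [map_mul] using congrArg (algebraMap R K) hab))
  obtain ⟨s₁, hadj₁, hinv₁⟩ := exists_isRingInvolutionOver (p := p) hreg u₁
  obtain ⟨s₂, hadj₂, hinv₂⟩ := exists_isRingInvolutionOver (p := p) hreg u₂
  refine ⟨s₁, s₂, fun x => (isAdjointPair_iff_map_eq (isUnit_map_gramMatrix ht u₁) _ _).1 (hadj₁ x),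
    fun x => (isAdjointPair_iff_map_eq (isUnit_map_gramMatrix ht u₂) _ _).1 (hadj₂ x),
    hinv₁, hinv₂, ?_⟩
  rintro ⟨ψ, hψ⟩
  have haniso : ResiduallyAnisotropic s₁ := (residuallyAnisotropic_iff hreg u₁ hadj₁).2 h₁
  exact h₂ ((residuallyAnisotropic_iff hreg u₂ hadj₂).1 (haniso.of_intertwines hcard ψ hψ))

end Intertwining

section HereditaryOrder

open blockOrder

/-- The lower diagonal block `{5, 6}` of the hereditary order, with indices counted from `0`. -/
abbrev IsLowerIndex (i : Fin 6) : Prop := 4 ≤ i.val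

/-- The units `u` with `a₁ = diag(u) * diag(1, 1, 1, 1, t, t)`. -/
def a1Units : Fin 6 → (PowerSeries ℝ)ˣ := ![1, -1, 1, -1, 1, 1]

/-- The units `u` with `a₂ = diag(u) * diag(1, 1, 1, 1, t, t)`. -/
def a2Units : Fin 6 → (PowerSeries ℝ)ˣ := ![1, -1, 1, 1, 1, -1]

theorem card_isLowerIndex_lt_card_not :
    Fintype.card {i // IsLowerIndex i} < Fintype.card {i // ¬ IsLowerIndex i} := by
  decide

theorem toF_eq_mapMatrix :
    toF = (algebraMap (PowerSeries ℝ) (LaurentSeries ℝ)).mapMatrix := rfl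

theorem herOrder_eq_blockOrder : herOrder = blockOrder IsLowerIndex PowerSeries.X := by
  ext x
  refine forall₂_congr fun i j => ?_
  rw [not_le, Nat.lt_succ_iff]

theorem a1F_eq_toF_gramMatrix : a1F = toF (gramMatrix IsLowerIndex PowerSeries.X a1Units) := by
  rw [a1F, gramMatrix, toF, RingHom.mapMatrix_apply, diagonal_map (map_zero _)]
  congr 1
  ext1 i
  fin_cases i <;> simp [tL, a1Units]

theorem a2F_eq_toF_gramMatrix : a2F = toF (gramMatrix IsLowerIndex PowerSeries.X a2Units) := by
  rw [a2F, gramMatrix, toF, RingHom.mapMatrix_apply, diagonal_map (map_zero _)]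
  congr 1
  ext1 i
  fin_cases i <;> simp [tL, a2Units]

theorem isUnit_algebraMap_X {k : Type*} [Field k] :
    IsUnit (algebraMap (PowerSeries k) (LaurentSeries k) PowerSeries.X) := by
  simp

theorem residueForm_isLowerIndex_apply {R : Type*} [CommRing R] (t : R) (u : Fin 6 → Rˣ)
    (v : {i // IsLowerIndex i} → R ⧸ Ideal.span {t}) :
    residueForm IsLowerIndex t u v =
      Ideal.Quotient.mk _ (u 4 : R) * v ⟨4, by decide⟩ ^ 2 +
        Ideal.Quotient.mk _ (u 5 : R) * v ⟨5, by decide⟩ ^ 2 := by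
  have huniv : (Finset.univ : Finset {i // IsLowerIndex i}) =
      {⟨4, by decide⟩, ⟨5, by decide⟩} := by decide
  rw [residueForm, QuadraticMap.weightedSumSquares_apply, huniv, Finset.sum_pair (by decide)]
  simp only [residueWeights, smul_eq_mul, pow_two]

theorem X_dvd_and_X_dvd_of_X_dvd_sq_add_sq {k : Type*} [CommRing k] [LinearOrder k]
    [IsStrictOrderedRing k] {f g : PowerSeries k} (h : PowerSeries.X ∣ f ^ 2 + g ^ 2) :
    PowerSeries.X ∣ f ∧ PowerSeries.X ∣ g := by
  simp only [PowerSeries.X_dvd_iff, map_add, map_pow] at h ⊢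
  constructor <;> nlinarith

theorem anisotropic_residueForm_one_one {k : Type*} [CommRing k] [LinearOrder k]
    [IsStrictOrderedRing k] {u : Fin 6 → (PowerSeries k)ˣ} (h₄ : u 4 = 1) (h₅ : u 5 = 1) :
    (residueForm IsLowerIndex PowerSeries.X u).Anisotropic := by
  intro v hv
  obtain ⟨f, hf⟩ := Ideal.Quotient.mk_surjective (v ⟨4, by decide⟩)
  obtain ⟨g, hg⟩ := Ideal.Quotient.mk_surjective (v ⟨5, by decide⟩)
  have hdvd : PowerSeries.X ∣ f ^ 2 + g ^ 2 := by
    rw [← Ideal.Quotient.eq_zero_iff_dvd, map_add, map_pow, map_pow, hf, hg]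
    simpa [residueForm_isLowerIndex_apply, h₄, h₅] using hv
  obtain ⟨hXf, hXg⟩ := X_dvd_and_X_dvd_of_X_dvd_sq_add_sq hdvd
  rw [← Ideal.Quotient.eq_zero_iff_dvd] at hXf hXg
  ext ⟨i, hi⟩
  obtain rfl | rfl : i = 4 ∨ i = 5 := by omega
  · exact hf.symm.trans hXf
  · exact hg.symm.trans hXg

theorem not_anisotropic_residueForm_one_neg_one {R : Type*} [CommRing R] {t : R}
    (ht : ¬ IsUnit t) {u : Fin 6 → Rˣ} (h₄ : u 4 = 1) (h₅ : u 5 = -1) :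
    ¬ (residueForm IsLowerIndex t u).Anisotropic := by
  intro h
  have hone : (1 : R ⧸ Ideal.span {t}) = 0 := congrFun (h 1 (by
    simp [residueForm_isLowerIndex_apply, h₄, h₅])) ⟨4, by decide⟩
  rw [← map_one (Ideal.Quotient.mk _), Ideal.Quotient.eq_zero_iff_dvd] at hone
  exact ht (isUnit_of_dvd_one hone)

theorem anisotropic_residueForm_a1Units :
    (residueForm IsLowerIndex PowerSeries.X a1Units).Anisotropic :=
  anisotropic_residueForm_one_one rfl rfl

theorem not_anisotropic_residueForm_a2Units :
    ¬ (residueForm IsLowerIndex PowerSeries.X a2Units).Anisotropic :=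
  not_anisotropic_residueForm_one_neg_one PowerSeries.X_prime.not_isUnit rfl rfl

end HereditaryOrder

/-- With `R = ℝ[[t]]`, `A = herOrder ⊆ Mat₆(R)`,
`a₁ = diag(1, −1, 1, −1, t, t)`, `a₂ = diag(1, −1, 1, 1, t, −t)` and
`σᵢ(x) = aᵢ⁻¹ xᵀ aᵢ` computed in `Mat₆(ℝ((t)))`:  each `σᵢ` maps `A` into `A` and
restricts to an `R`-linear involution `sᵢ` of `A`, and there is no `R`-algebra
automorphism `ψ` of `A` with `ψ ∘ σ₁ = σ₂ ∘ ψ`. -/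
theorem no_automorphism_intertwines_orthogonal_involutions :
    ∃ s₁ s₂ : herOrder → herOrder,
      (∀ x : herOrder,
        toF (s₁ x : Matrix (Fin 6) (Fin 6) (PowerSeries ℝ))
          = a1F⁻¹ * (toF (x : Matrix (Fin 6) (Fin 6) (PowerSeries ℝ)))ᵀ * a1F) ∧
      (∀ x : herOrder,
        toF (s₂ x : Matrix (Fin 6) (Fin 6) (PowerSeries ℝ))
          = a2F⁻¹ * (toF (x : Matrix (Fin 6) (Fin 6) (PowerSeries ℝ)))ᵀ * a2F) ∧
      IsRingInvolutionOver (PowerSeries ℝ) herOrder s₁ ∧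
      IsRingInvolutionOver (PowerSeries ℝ) herOrder s₂ ∧
      ¬ ∃ ψ : herOrder ≃ₐ[PowerSeries ℝ] herOrder,
          ∀ x : herOrder, ψ (s₁ x) = s₂ (ψ x) := by
  rw [herOrder_eq_blockOrder, a1F_eq_toF_gramMatrix, a2F_eq_toF_gramMatrix, toF_eq_mapMatrix]
  with_reducible
    exact no_automorphism_intertwines_orthogonal_involutions_general isUnit_algebraMap_X
      PowerSeries.span_X_isPrime card_isLowerIndex_lt_card_not anisotropic_residueForm_a1Units
      not_anisotropic_residueForm_a2Units

end
end

section
/- Let R = ℝ[[t]] and let O = ℂ[[t]], the ring of formal power series over ℂ. Let A be the R-subalgebra of Mat₆(O) consisting of all matrices whose (i,j) entry lies in tO whenever i ∈ {1,2,3,4} and j ∈ {5,6}, and set a₁ = diag(1, −1, 1, −1, t, t), a₂ = diag(1, −1, 1, 1, t, −t) ∈ Mat₆(O). Let τ denote the conjugate-transpose involution of Mat₆ over O, τ(x)_{ij} = conj(x_{ji}), where conj applies complex conjugation to each coefficient of a power series. For i = 1, 2 define σᵢ(x) = aᵢ⁻¹ τ(x) aᵢ, computed in Mat₆(ℂ((t))).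 Then each σᵢ maps A into A and restricts to an R-linear involution of A, and there is no R-algebra automorphism ψ of A such that ψ ∘ σ₁ = σ₂ ∘ ψ. -/
open Matrix

noncomputable section

/-- The hereditary order `A ⊆ Mat₆(ℂ[[t]])`, an algebra over `R = ℝ[[t]]`: all matrices
whose `(i,j)` entry is divisible by `t` (i.e. lies in `t·ℂ[[t]]`) whenever
`i ∈ {1,2,3,4}` and `j ∈ {5,6}` (indexed here by `i ∈ {0,1,2,3}`, `j ∈ {4,5}`). -/
def herOrderC : Subalgebra (PowerSeries ℝ) (Matrix (Fin 6) (Fin 6) (PowerSeries ℂ)) where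
  carrier := {x | ∀ i j : Fin 6, i.val ≤ 3 → 4 ≤ j.val → (PowerSeries.X : PowerSeries ℂ) ∣ x i j}
  mul_mem' := by
    intro x y hx hy i j hi hj
    rw [Matrix.mul_apply]
    refine Finset.dvd_sum fun k _ => ?_
    by_cases hk : (k : ℕ) ≤ 3
    · exact dvd_mul_of_dvd_right (hy k j hk hj) _
    · exact dvd_mul_of_dvd_left (hx i k hi (by omega)) _
  add_mem' := by
    intro x y hx hy i j hi hj
    exact dvd_add (hx i j hi hj) (hy i j hi hj)
  one_mem' := by
    intro i j hi hj
    rw [Matrix.one_apply_ne (Fin.ne_of_val_ne (by omega))]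
    exact dvd_zero _
  zero_mem' := by
    intro i j hi hj
    rw [Matrix.zero_apply]
    exact dvd_zero _
  algebraMap_mem' := by
    intro r i j hi hj
    rw [Matrix.algebraMap_matrix_apply, if_neg (Fin.ne_of_val_ne (by omega : i.val ≠ j.val))]
    exact dvd_zero _

/-- The element `t` of the field of Laurent series `ℂ((t))`. -/
def tLC : LaurentSeries ℂ := (PowerSeries.X : PowerSeries ℂ)

/-- The canonical embedding `Mat₆(ℂ[[t]]) → Mat₆(ℂ((t)))`. -/
def toFC : Matrix (Fin 6) (Fin 6) (PowerSeries ℂ) →+* Matrix (Fin 6) (Fin 6) (LaurentSeries ℂ) :=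
  (HahnSeries.ofPowerSeries ℤ ℂ).mapMatrix

/-- The involution `τ` of `Mat₆(ℂ[[t]])`: conjugate-transpose, where `conj` applies
complex conjugation to each coefficient of a power series. -/
def tauC (x : Matrix (Fin 6) (Fin 6) (PowerSeries ℂ)) : Matrix (Fin 6) (Fin 6) (PowerSeries ℂ) :=
  (x.map (PowerSeries.map (starRingEnd ℂ)))ᵀ

/-- `a₁ = diag(1, −1, 1, −1, t, t)`, viewed in `Mat₆(ℂ((t)))`. -/
def a1FC : Matrix (Fin 6) (Fin 6) (LaurentSeries ℂ) := diagonal ![1, -1, 1, -1, tLC, tLC]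

/-- `a₂ = diag(1, −1, 1, 1, t, −t)`, viewed in `Mat₆(ℂ((t)))`. -/
def a2FC : Matrix (Fin 6) (Fin 6) (LaurentSeries ℂ) := diagonal ![1, -1, 1, 1, tLC, -tLC]

/-!
Over `R = ℝ⟦X⟧`, taking the lower right `2 × 2` block modulo `X` is a ring homomorphism
`residue : A → Mat₂(ℂ)`, and it records enough of `A` to distinguish the two involutions.

* Its kernel is stable under `R`-algebra endomorphisms `ψ`. The `4 × 4` matrix units of the upper
  left block have no room in `Mat₂(ℂ)`, so `residue ∘ ψ` kills the idempotent `P`, the sum of the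
  diagonal ones. It also kills `X A`, and every `x` in the kernel satisfies
  `(1 - P) x (1 - P) ∈ X A`.
* On the residue block `σ₁` is the adjoint of the positive definite form `⟨1, 1⟩`, so
  `σ₁(f) f = 0` forces `residue f = 0`. The form `⟨1, -1⟩` attached to `σ₂` is isotropic, which
  gives an `e` with `σ₂(e) e = 0` and `residue e ≠ 0`. If `ψ` intertwines `σ₁` with `σ₂`, then
  `f = ψ⁻¹(e)` contradicts the stability of the kernel.
-/

open scoped PowerSeries

section MatrixUnits

/-- A system of matrix units `e i j` in a ring; the diagonal units need not sum to `1`. -/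
structure IsMatrixUnits {ι B : Type*} [Mul B] [Zero B] (e : ι → ι → B) : Prop where
  mul_same : ∀ i j k, e i j * e j k = e i k
  mul_of_ne : ∀ i {j k} l, j ≠ k → e i j * e k l = 0

namespace IsMatrixUnits

variable {ι B : Type*}

lemma map {C F : Type*} [NonUnitalNonAssocSemiring B] [NonUnitalNonAssocSemiring C] [FunLike F B C]
    [NonUnitalRingHomClass F B C] {e : ι → ι → B} (he : IsMatrixUnits e) (f : F) :
    IsMatrixUnits fun i j => f (e i j) where
  mul_same i j k := by rw [← map_mul, he.mul_same]
  mul_of_ne i _ _ l h := by rw [← map_mul, he.mul_of_ne i l h, map_zero]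

lemma eq_zero_of_eq_zero [SemigroupWithZero B] {e : ι → ι → B} (he : IsMatrixUnits e) {i j : ι}
    (h : e i j = 0) (k l : ι) : e k l = 0 := by
  rw [← he.mul_same k j l, ← he.mul_same k i j, h, mul_zero, zero_mul]

variable {K : Type*} [Field K] [Ring B] [Algebra K B] {e : ι → ι → B}

lemma linearIndependent (he : IsMatrixUnits e) (h : ∀ i j, e i j ≠ 0) :
    LinearIndependent K fun p : ι × ι => e p.1 p.2 := by
  refine linearIndependent_iff'.2 fun t g hg ⟨k, l⟩ hkl => ?_
  have sandwich : e k k * (∑ p ∈ t, g p • e p.1 p.2) * e l l = g (k, l) • e k l := by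
    rw [Finset.mul_sum, Finset.sum_mul, Finset.sum_eq_single_of_mem (k, l) hkl]
    · rw [mul_smul_comm, smul_mul_assoc, he.mul_same, he.mul_same]
    · rintro ⟨i, j⟩ - hij
      rw [mul_smul_comm, smul_mul_assoc]
      by_cases hi : k = i
      · rw [mul_assoc, he.mul_of_ne i l fun hj => hij (by rw [hi, ← hj]), mul_zero, smul_zero]
      · rw [he.mul_of_ne k j hi, zero_mul, smul_zero]
  rw [hg, mul_zero, zero_mul] at sandwich
  exact (smul_eq_zero.1 sandwich.symm).resolve_right (h k l)

theorem eq_zero_of_finrank_lt [Fintype ι] [Module.Finite K B] (he : IsMatrixUnits e)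
    (h : Module.finrank K B < Fintype.card ι ^ 2) (i j : ι) : e i j = 0 := by
  by_contra hne
  have hcard := (he.linearIndependent (K := K)
    fun k l hkl => hne (he.eq_zero_of_eq_zero hkl i j)).fintype_card_le_finrank
  rw [Fintype.card_prod, ← sq] at hcard
  exact hcard.not_gt h

end IsMatrixUnits

end MatrixUnits

section AdjointInvolution

/-- The map `s` on the subalgebra `A` is the adjoint involution `x ↦ D⁻¹ x* D` of the hermitian
element `D`. Since `D` need not be invertible, the relation is stated without `D⁻¹`. -/
def IsAdjointFor {R M : Type*} [CommSemiring R] [Semiring M] [Star M] [Algebra R M]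
    {A : Subalgebra R M} (D : M) (s : A → A) : Prop :=
  ∀ x : A, D * (s x : M) = star (x : M) * D

variable {R M : Type*} [CommSemiring R] [Semiring M] [StarRing M] [Algebra R M]
  {A : Subalgebra R M} {D : M}

-- The adjoint of `x ∈ M ∩ D⁻¹ M D` is `y*`, where `D x = y D`.
lemma exists_isAdjointFor (hD : IsSelfAdjoint D) (hA : ∀ x, x ∈ A ↔ ∃ y, D * x = y * D) :
    ∃ s : A → A, IsAdjointFor D s := by
  choose y hy using fun x : A => (hA x).1 x.2
  have adjoint_eq (x : A) : D * star (y x) = star (x : M) * D := by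
    simpa only [star_mul, hD.star_eq] using congrArg star (hy x).symm
  exact ⟨fun x => ⟨star (y x), (hA _).2 ⟨_, adjoint_eq x⟩⟩, adjoint_eq⟩

namespace IsAdjointFor

variable {s : A → A}

lemma isRingInvolutionOver {R M : Type*} [CommRing R] [StarRing R] [TrivialStar R] [Ring M]
    [StarRing M] [Algebra R M] [StarModule R M] {A : Subalgebra R M} {D : M} {s : A → A}
    (hs : IsAdjointFor D s) (hD : IsSelfAdjoint D) (hreg : IsLeftRegular D) :
    IsRingInvolutionOver R A s := by
  have eq_of_mul_eq {x y : A} (h : D * (x : M) = D * (y : M)) : x = y := Subtype.ext (hreg h)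
  refine ⟨fun r x => eq_of_mul_eq ?_, fun x y => eq_of_mul_eq ?_, fun x y => eq_of_mul_eq ?_,
    eq_of_mul_eq ?_, fun x => eq_of_mul_eq ?_⟩
  · simp only [hs _, Subalgebra.coe_smul, star_smul, star_trivial, smul_mul_assoc, mul_smul_comm]
  · simp only [hs _, Subalgebra.coe_add, star_add, add_mul, mul_add]
  · rw [hs, Subalgebra.coe_mul, Subalgebra.coe_mul, star_mul, ← mul_assoc, hs, mul_assoc, mul_assoc,
      hs]
  · rw [hs, Subalgebra.coe_one, star_one, one_mul, mul_one]
  · rw [hs]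
    simpa only [star_mul, hD.star_eq, star_star] using congrArg star (hs x)

lemma mul_self_eq_zero (hs : IsAdjointFor D s) (hreg : IsLeftRegular D) {x : A}
    (hx : star (x : M) * D * (x : M) = 0) : s x * x = 0 := by
  apply Subtype.ext
  apply hreg
  change D * ((s x : M) * (x : M)) = D * 0
  rw [← mul_assoc, hs, hx, mul_zero]

lemma map_eq_nonsing_inv_mul_mul {n S : Type*} [Fintype n] [DecidableEq n] [CommRing S]
    (hs : IsAdjointFor D s) (f : M →+* Matrix n n S) (hf : IsUnit (f D).det) (x : A) :
    f (s x) = (f D)⁻¹ * f (star (x : M)) * f D := by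
  rw [mul_assoc, ← map_mul, ← hs, map_mul, nonsing_inv_mul_cancel_left _ _ hf]

end IsAdjointFor

end AdjointInvolution

section Matrices

variable {n S : Type*} [Fintype n]

lemma exists_diagonal_mul_eq_mul_diagonal_iff [DecidableEq n] [CommSemiring S] {v : n → S}
    {x : Matrix n n S} :
    (∃ y, diagonal v * x = y * diagonal v) ↔ ∀ i j, v j ∣ v i * x i j := by
  refine ⟨fun ⟨y, hy⟩ i j => ?_, fun h => ?_⟩
  · rw [← diagonal_mul, hy, mul_diagonal]
    exact dvd_mul_left _ _
  · choose y hy using h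
    refine ⟨of y, ext fun i j => ?_⟩
    rw [diagonal_mul, mul_diagonal, hy, of_apply, mul_comm]

lemma isLeftRegular_diagonal [DecidableEq n] [Semiring S] {v : n → S}
    (hv : ∀ i, IsLeftRegular (v i)) : IsLeftRegular (diagonal v) :=
  fun x y h => ext fun i j => hv i <| by simpa only [diagonal_mul] using congrFun₂ h i j

lemma conjTranspose_vecMulVec_mul_mul_vecMulVec [CommSemiring S] [StarMul S] (D : Matrix n n S)
    (u w : n → S) :
    (vecMulVec u w)ᴴ * D * vecMulVec u w = (star u ⬝ᵥ D *ᵥ u) • vecMulVec (star w) w := by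
  rw [conjTranspose_vecMulVec, Matrix.mul_assoc, mul_vecMulVec, vecMulVec_mul_vecMulVec]
  ext i j
  simp only [vecMulVec_apply, Matrix.smul_apply, Pi.smul_apply, smul_eq_mul]
  ring

end Matrices

section StarPowerSeries

instance powerSeriesStarRing {S : Type*} [CommSemiring S] [StarRing S] : StarRing S⟦X⟧ where
  star := PowerSeries.map (starRingEnd S)
  star_involutive f := by ext; simp
  star_mul f g := by simp [mul_comm]
  star_add f g := by simp

lemma star_powerSeries_def {S : Type*} [CommSemiring S] [StarRing S] (f : S⟦X⟧) :
    star f = PowerSeries.map (starRingEnd S) f :=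
  rfl

instance powerSeriesTrivialStar {S : Type*} [CommSemiring S] [StarRing S] [TrivialStar S] :
    TrivialStar S⟦X⟧ where
  star_trivial f := by ext; simp [star_powerSeries_def]

instance powerSeriesStarModule {S T : Type*} [CommSemiring S] [StarRing S] [CommSemiring T]
    [StarRing T] [Algebra S T] [StarModule S T] : StarModule S⟦X⟧ T⟦X⟧ where
  star_smul f g := by
    rw [Algebra.smul_def, Algebra.smul_def, star_mul', PowerSeries.algebraMap_apply'',
      PowerSeries.algebraMap_apply'']
    congr 1
    ext
    simp [star_powerSeries_def, starRingEnd_apply, algebraMap_star_comm]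

end StarPowerSeries

section HereditaryOrder

lemma tauC_eq_star (x : Matrix (Fin 6) (Fin 6) ℂ⟦X⟧) : tauC x = star x :=
  rfl

lemma isUnit_det_toFC {D : Matrix (Fin 6) (Fin 6) ℂ⟦X⟧} (hD : D.det ≠ 0) :
    IsUnit (toFC D).det := by
  rw [toFC, ← RingHom.map_det, isUnit_iff_ne_zero]
  exact (map_ne_zero_iff _ HahnSeries.ofPowerSeries_injective).2 hD

/-- The model diagonal weights `(1, 1, 1, 1, X, X)`. An adjoint involution `x ↦ D⁻¹ x* D` preserves
the hereditary order as soon as the entries of the diagonal `D` agree with them up to units. -/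
def blockWeight (i : Fin 6) : ℂ⟦X⟧ :=
  if i.val ≤ 3 then 1 else PowerSeries.X

lemma mem_herOrderC_iff_exists_diagonal_mul_eq {v : Fin 6 → ℂ⟦X⟧}
    (hv : ∀ i, Associated (blockWeight i) (v i)) (x : Matrix (Fin 6) (Fin 6) ℂ⟦X⟧) :
    x ∈ herOrderC ↔ ∃ y, diagonal v * x = y * diagonal v := by
  rw [exists_diagonal_mul_eq_mul_diagonal_iff]
  refine forall₂_congr fun i j => ?_
  rw [← (hv j).dvd_iff_dvd_left, ← ((hv i).mul_right _).dvd_iff_dvd_right]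
  unfold blockWeight
  by_cases hi : i.val ≤ 3 <;> by_cases hj : j.val ≤ 3 <;>
    simp [hi, hj, show 4 ≤ j.val ↔ ¬ j.val ≤ 3 by omega]

lemma ne_zero_of_associated_blockWeight {v : Fin 6 → ℂ⟦X⟧}
    (hv : ∀ i, Associated (blockWeight i) (v i)) (i : Fin 6) : v i ≠ 0 := by
  rw [← (hv i).ne_zero_iff, blockWeight]
  split_ifs
  · exact one_ne_zero
  · exact PowerSeries.X_ne_zero

lemma exists_adjointInvolution {v : Fin 6 → ℂ⟦X⟧} (hv : ∀ i, Associated (blockWeight i) (v i))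
    (hv' : IsSelfAdjoint v) :
    ∃ s : herOrderC → herOrderC, IsAdjointFor (diagonal v) s ∧
      IsRingInvolutionOver ℝ⟦X⟧ herOrderC s ∧
      ∀ x : herOrderC, toFC (s x) =
        (toFC (diagonal v))⁻¹ * toFC (tauC x) * toFC (diagonal v) := by
  have hv₀ := ne_zero_of_associated_blockWeight hv
  have hD : IsSelfAdjoint (diagonal v) := isHermitian_diagonal_of_self_adjoint v hv'
  have hreg : IsLeftRegular (diagonal v) :=
    isLeftRegular_diagonal fun i => (IsRegular.of_ne_zero (hv₀ i)).left
  have hdet : (diagonal v).det ≠ 0 := by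
    rw [det_diagonal]
    exact Finset.prod_ne_zero_iff.2 fun i _ => hv₀ i
  obtain ⟨s, hs⟩ := exists_isAdjointFor hD (mem_herOrderC_iff_exists_diagonal_mul_eq hv)
  refine ⟨s, hs, hs.isRingInvolutionOver hD hreg, fun x => ?_⟩
  rw [tauC_eq_star, hs.map_eq_nonsing_inv_mul_mul toFC (isUnit_det_toFC hdet)]

/-- The diagonal of `a₁`, over `ℂ⟦X⟧` rather than `ℂ((X))`. -/
def weight₁ : Fin 6 → ℂ⟦X⟧ := ![1, -1, 1, -1, PowerSeries.X, PowerSeries.X]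

/-- The diagonal of `a₂`, over `ℂ⟦X⟧` rather than `ℂ((X))`. -/
def weight₂ : Fin 6 → ℂ⟦X⟧ := ![1, -1, 1, 1, PowerSeries.X, -PowerSeries.X]

lemma associated_weight₁ (i : Fin 6) : Associated (blockWeight i) (weight₁ i) := by
  fin_cases i <;> simp [blockWeight, weight₁]

lemma associated_weight₂ (i : Fin 6) : Associated (blockWeight i) (weight₂ i) := by
  fin_cases i <;> simp [blockWeight, weight₂]

lemma isSelfAdjoint_weight₁ : IsSelfAdjoint weight₁ := by
  funext i
  fin_cases i <;> simp [weight₁, star_powerSeries_def]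

lemma isSelfAdjoint_weight₂ : IsSelfAdjoint weight₂ := by
  funext i
  fin_cases i <;> simp [weight₂, star_powerSeries_def]

lemma toFC_diagonal_weight₁ : toFC (diagonal weight₁) = a1FC := by
  rw [a1FC, toFC, RingHom.mapMatrix_apply, diagonal_map (map_zero _)]
  congr 1
  funext i
  fin_cases i <;> simp [weight₁, tLC]

lemma toFC_diagonal_weight₂ : toFC (diagonal weight₂) = a2FC := by
  rw [a2FC, toFC, RingHom.mapMatrix_apply, diagonal_map (map_zero _)]
  congr 1
  funext i
  fin_cases i <;> simp [weight₂, tLC]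

end HereditaryOrder

section Residue

lemma constantCoeff_eq_zero_of_mem_herOrderC {x : Matrix (Fin 6) (Fin 6) ℂ⟦X⟧}
    (hx : x ∈ herOrderC) (i : Fin 4) (j : Fin 2) :
    PowerSeries.constantCoeff (x (Fin.castAdd 2 i) (Fin.natAdd 4 j)) = 0 :=
  PowerSeries.X_dvd_iff.1 (hx _ _ (Nat.le_of_lt_succ i.isLt) (Nat.le_add_right 4 j))

/-- The lower right `2 × 2` block modulo `X`, one of the two simple quotients of the hereditary
order. It is multiplicative because the upper right block is divisible by `X`. -/
def residue : herOrderC →+* Matrix (Fin 2) (Fin 2) ℂ where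
  toFun x := of fun i j => PowerSeries.constantCoeff (x.1 (Fin.natAdd 4 i) (Fin.natAdd 4 j))
  map_one' := by
    ext i j
    fin_cases i <;> fin_cases j <;> simp [one_apply]
  map_zero' := by
    ext
    simp
  map_add' x y := by
    ext
    simp
  map_mul' x y := by
    ext i j
    have hsum := Fin.sum_univ_add (a := 4) (b := 2) fun k =>
      PowerSeries.constantCoeff (x.1 (Fin.natAdd 4 i) k * y.1 k (Fin.natAdd 4 j))
    simp only [map_mul, constantCoeff_eq_zero_of_mem_herOrderC y.2, mul_zero,
      Finset.sum_const_zero, zero_add] at hsum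
    simpa [mul_apply] using hsum

lemma residue_apply (x : herOrderC) (i j : Fin 2) :
    residue x i j = PowerSeries.constantCoeff (x.1 (Fin.natAdd 4 i) (Fin.natAdd 4 j)) :=
  rfl

lemma coe_smul_apply (r : ℝ⟦X⟧) (x : herOrderC) (i j : Fin 6) :
    (r • x).1 i j = PowerSeries.map (algebraMap ℝ ℂ) r * x.1 i j :=
  Algebra.smul_def r (x.1 i j)

lemma residue_X_smul (x : herOrderC) : residue ((PowerSeries.X : ℝ⟦X⟧) • x) = 0 := by
  ext
  simp [residue_apply, coe_smul_apply]

lemma exists_eq_X_smul {x : herOrderC} (hX : ∀ i j, PowerSeries.X ∣ x.1 i j)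
    (hzero : ∀ i j : Fin 6, i.val ≤ 3 → 4 ≤ j.val → x.1 i j = 0) :
    ∃ y : herOrderC, x = (PowerSeries.X : ℝ⟦X⟧) • y := by
  choose y hy using hX
  refine ⟨⟨of y, fun i j hi hj => ?_⟩, Subtype.ext <| ext fun i j => ?_⟩
  · have hXy : PowerSeries.X * y i j = 0 := by rw [← hy, hzero i j hi hj]
    rw [of_apply, (mul_eq_zero.1 hXy).resolve_left PowerSeries.X_ne_zero]
    exact dvd_zero _
  · exact (hy i j).trans (by rw [coe_smul_apply, PowerSeries.map_X]; rfl)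

/-- The matrix units of the upper left `4 × 4` block, with rows and columns counted in `Fin 4`. -/
def upperUnit (i j : Fin 4) : herOrderC :=
  ⟨single (Fin.castAdd 2 i) (Fin.castAdd 2 j) 1, fun k l _ hl => by
    have hj : Fin.castAdd 2 j ≠ l := Fin.ne_of_val_ne (by rw [Fin.val_castAdd]; omega)
    exact (dvd_zero _).trans (single_apply_of_col_ne (Fin.castAdd 2 i) k hj 1).symm.dvd⟩

lemma isMatrixUnits_upperUnit : IsMatrixUnits upperUnit where
  mul_same i j k := Subtype.ext <| (single_mul_single_same ..).trans (by rw [mul_one]; rfl)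
  mul_of_ne i j k l h := Subtype.ext <|
    single_mul_single_of_ne _ _ _ _ ((Fin.castAdd_injective 4 2).ne h) _

/-- The idempotent of the hereditary order that projects onto the first four coordinates. -/
def upperIdempotent : herOrderC :=
  ∑ i, upperUnit i i

lemma coe_one_sub_upperIdempotent : (1 - upperIdempotent : herOrderC).1 =
    diagonal fun i => if i.val ≤ 3 then 0 else 1 := by
  ext1 i j
  fin_cases i <;> fin_cases j <;>
    simp [upperIdempotent, upperUnit, Fin.sum_univ_four]

lemma exists_corner_eq_X_smul {x : herOrderC} (hx : residue x = 0) :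
    ∃ y : herOrderC,
      (1 - upperIdempotent) * x * (1 - upperIdempotent) = (PowerSeries.X : ℝ⟦X⟧) • y := by
  have corner_apply (i j : Fin 6) : ((1 - upperIdempotent) * x * (1 - upperIdempotent)).1 i j =
      if i.val ≤ 3 ∨ j.val ≤ 3 then 0 else x.1 i j := by
    rw [Subalgebra.coe_mul, Subalgebra.coe_mul, coe_one_sub_upperIdempotent, mul_diagonal,
      diagonal_mul]
    grind
  refine exists_eq_X_smul (fun i j => ?_) fun i j hi _ => by rw [corner_apply, if_pos (.inl hi)]
  rw [corner_apply]
  split_ifs with hij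
  · exact dvd_zero _
  · obtain ⟨i, rfl⟩ : ∃ k : Fin 2, Fin.natAdd 4 k = i :=
      ⟨⟨i - 4, by omega⟩, Fin.ext (Nat.add_sub_cancel' (by omega))⟩
    obtain ⟨j, rfl⟩ : ∃ k : Fin 2, Fin.natAdd 4 k = j :=
      ⟨⟨j - 4, by omega⟩, Fin.ext (Nat.add_sub_cancel' (by omega))⟩
    exact PowerSeries.X_dvd_iff.2 (congrFun₂ hx i j)

theorem residue_algHom_eq_zero (ψ : herOrderC →ₐ[ℝ⟦X⟧] herOrderC) {x : herOrderC}
    (hx : residue x = 0) : residue (ψ x) = 0 := by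
  have hP : residue (ψ upperIdempotent) = 0 := by
    rw [upperIdempotent, map_sum, map_sum]
    exact Finset.sum_eq_zero fun i _ => (isMatrixUnits_upperUnit.map
      (residue.comp (ψ : herOrderC →+* herOrderC))).eq_zero_of_finrank_lt (K := ℂ)
        (by simp [Module.finrank_matrix]) i i
  obtain ⟨y, hy⟩ := exists_corner_eq_X_smul hx
  simpa [hP, residue_X_smul] using congrArg (fun z => residue (ψ z)) hy

end Residue

section Isotropy

variable {v : Fin 6 → ℂ⟦X⟧} {s : herOrderC → herOrderC}

lemma residue_eq_conjTranspose (hs : IsAdjointFor (diagonal v) s)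
    (hv : ∀ i : Fin 2, v (Fin.natAdd 4 i) = PowerSeries.X) (x : herOrderC) :
    residue (s x) = (residue x)ᴴ := by
  ext i j
  have h := congrFun₂ (hs x) (Fin.natAdd 4 i) (Fin.natAdd 4 j)
  rw [diagonal_mul, mul_diagonal, hv, hv, mul_comm] at h
  rw [residue_apply, mul_right_cancel₀ PowerSeries.X_ne_zero h]
  simp only [star_apply, star_powerSeries_def, conjTranspose_apply, residue_apply,
    ← PowerSeries.coeff_zero_eq_constantCoeff_apply, PowerSeries.coeff_map, starRingEnd_apply]

open scoped ComplexOrder in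
lemma residue_eq_zero_of_mul_self_eq_zero (hs : IsAdjointFor (diagonal v) s)
    (hv : ∀ i : Fin 2, v (Fin.natAdd 4 i) = PowerSeries.X) {x : herOrderC} (hx : s x * x = 0) :
    residue x = 0 := by
  rw [← conjTranspose_mul_self_eq_zero, ← residue_eq_conjTranspose hs hv, ← map_mul, hx, map_zero]

lemma exists_mul_self_eq_zero_residue_ne_zero (hs : IsAdjointFor (diagonal v) s)
    (hv₀ : ∀ i, v i ≠ 0) (hv : v 4 + v 5 = 0) :
    ∃ e : herOrderC, s e * e = 0 ∧ residue e ≠ 0 := by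
  have hreg : IsLeftRegular (diagonal v) :=
    isLeftRegular_diagonal fun i => (IsRegular.of_ne_zero (hv₀ i)).left
  let u : Fin 6 → ℂ⟦X⟧ := ![0, 0, 0, 0, 1, 1]
  have isotropic : star u ⬝ᵥ diagonal v *ᵥ u = 0 := by
    simp [u, dotProduct, mulVec_diagonal, Fin.sum_univ_six, hv]
  have mem : vecMulVec u u ∈ herOrderC := by
    intro i j hi _
    have hu : u i = 0 := by fin_cases i <;> simp_all [u]
    rw [vecMulVec_apply, hu, zero_mul]
    exact dvd_zero _
  refine ⟨⟨vecMulVec u u, mem⟩, hs.mul_self_eq_zero hreg ?_, fun h => ?_⟩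
  · rw [star_eq_conjTranspose, conjTranspose_vecMulVec_mul_mul_vecMulVec, isotropic, zero_smul]
  · simpa [residue_apply, vecMulVec_apply, u] using congrFun₂ h 0 0

end Isotropy

/-- With `R = ℝ[[t]]`, `O = ℂ[[t]]`, `A = herOrderC ⊆ Mat₆(O)`,
`a₁ = diag(1, −1, 1, −1, t, t)`, `a₂ = diag(1, −1, 1, 1, t, −t)`, `τ` the
conjugate-transpose involution, and `σᵢ(x) = aᵢ⁻¹ τ(x) aᵢ` computed in `Mat₆(ℂ((t)))`:
each `σᵢ` maps `A` into `A` and restricts to an `R`-linear involution `sᵢ` of `A`, and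
there is no `R`-algebra automorphism `ψ` of `A` with `ψ ∘ σ₁ = σ₂ ∘ ψ`. -/
theorem no_automorphism_intertwines_unitary_involutions :
    ∃ s₁ s₂ : herOrderC → herOrderC,
      (∀ x : herOrderC,
        toFC (s₁ x : Matrix (Fin 6) (Fin 6) (PowerSeries ℂ))
          = a1FC⁻¹ * toFC (tauC (x : Matrix (Fin 6) (Fin 6) (PowerSeries ℂ))) * a1FC) ∧
      (∀ x : herOrderC,
        toFC (s₂ x : Matrix (Fin 6) (Fin 6) (PowerSeries ℂ))
          = a2FC⁻¹ * toFC (tauC (x : Matrix (Fin 6) (Fin 6) (PowerSeries ℂ))) * a2FC) ∧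
      IsRingInvolutionOver (PowerSeries ℝ) herOrderC s₁ ∧
      IsRingInvolutionOver (PowerSeries ℝ) herOrderC s₂ ∧
      ¬ ∃ ψ : herOrderC ≃ₐ[PowerSeries ℝ] herOrderC,
          ∀ x : herOrderC, ψ (s₁ x) = s₂ (ψ x) := by
  obtain ⟨s₁, hs₁, hinv₁, heq₁⟩ := exists_adjointInvolution associated_weight₁ isSelfAdjoint_weight₁
  obtain ⟨s₂, hs₂, hinv₂, heq₂⟩ := exists_adjointInvolution associated_weight₂ isSelfAdjoint_weight₂
  rw [toFC_diagonal_weight₁] at heq₁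
  rw [toFC_diagonal_weight₂] at heq₂
  refine ⟨s₁, s₂, heq₁, heq₂, hinv₁, hinv₂, ?_⟩
  rintro ⟨ψ, hψ⟩
  obtain ⟨e, he, hres⟩ := exists_mul_self_eq_zero_residue_ne_zero hs₂
    (ne_zero_of_associated_blockWeight associated_weight₂) (by simp [weight₂])
  obtain ⟨f, rfl⟩ := ψ.surjective e
  have hf : s₁ f * f = 0 := ψ.injective <| by rw [map_mul, hψ, he, map_zero]
  have hres_f : residue f = 0 := residue_eq_zero_of_mul_self_eq_zero hs₁
    (fun i => by fin_cases i <;> simp [weight₁]) hf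
  exact hres (residue_algHom_eq_zero ψ hres_f)

end
end
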